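/- For all x, y, z, w ∈ 𝓡 with x ∼ z and y ∼ w, one has x ⊗ y ∼ z ⊗ w. -/

import Mathlib

/-- The ambient space `𝓡` of decimal representations: an integer part together
with a sequence of digits in `{0,…,9}`. -/
abbrev DecimalRep := ℤ × (ℕ → Fin 10)

namespace DecimalRep

open scoped Classical

/-- The truncation `[x]_k = x₀ + ∑_{i=1}^k x_i / 10^i` of `x` up to the `k`-th
digit, as a rational number. -/
def trunc (x : DecimalRep) (k : ℕ) : ℚ :=
  (x.1 : ℚ) + ∑ i ∈ Finset.range k, ((x.2 i : ℕ) : ℚ) / 10 ^ (i + 1)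

/-- The order `⪯` on `𝓡`: `x ⪯ y` iff every truncation of `x` is at most the
corresponding truncation of `y`. -/
def le (x y : DecimalRep) : Prop := ∀ k : ℕ, trunc x k ≤ trunc y k

/-- The strict order `≺` on `𝓡`. -/
def lt (x y : DecimalRep) : Prop := le x y ∧ x ≠ y

/-- Two decimal representations are equivalent ("have no gap") iff there is no
third element lying between them. -/
def equiv (x y : DecimalRep) : Prop :=
  ¬ ∃ z : DecimalRep, z ≠ x ∧ z ≠ y ∧
      ((le x z ∧ le z y) ∨ (le y z ∧ le z x))

/-- `𝓡₉`: decimal representations ending in an infinite string of nines. -/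
def allNines (x : DecimalRep) : Prop := ∃ N : ℕ, ∀ k ≥ N, x.2 k = 9

/-- `ℚ_F`: decimal representations ending in an infinite string of zeros. -/
def finiteDec (x : DecimalRep) : Prop := ∃ N : ℕ, ∀ k ≥ N, x.2 k = 0

/-- The decimal expansion map `ι : ℚ → 𝓡`, satisfying
`[ι(α)]_k = ⌊10^k·α⌋/10^k` for all `k`. -/
def iota (α : ℚ) : DecimalRep :=
  (⌊α⌋, fun k => ⟨(⌊α * 10 ^ (k + 1)⌋ % 10).toNat, by
    have h1 : (0 : ℤ) ≤ ⌊α * 10 ^ (k + 1)⌋ % 10 := Int.emod_nonneg _ (by norm_num)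
    have h2 : ⌊α * 10 ^ (k + 1)⌋ % 10 < 10 := Int.emod_lt_of_pos _ (by norm_num)
    omega⟩)

/-- `M` is a least upper bound of `W` in `(𝓡,⪯)`. -/
def IsLub (W : Set DecimalRep) (M : DecimalRep) : Prop :=
  (∀ w ∈ W, le w M) ∧ ∀ M' : DecimalRep, (∀ w ∈ W, le w M') → le M M'

/-- `M` is a greatest lower bound of `W` in `(𝓡,⪯)`. -/
def IsGlb (W : Set DecimalRep) (M : DecimalRep) : Prop :=
  (∀ w ∈ W, le M w) ∧ ∀ M' : DecimalRep, (∀ w ∈ W, le M' w) → le M' M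

/-- The least upper bound of a set in `(𝓡,⪯)` (junk value if none exists). -/
noncomputable def sup (W : Set DecimalRep) : DecimalRep :=
  if h : ∃ M, IsLub W M then h.choose else default

/-- The greatest lower bound of a set in `(𝓡,⪯)` (junk value if none exists). -/
noncomputable def inf (W : Set DecimalRep) : DecimalRep :=
  if h : ∃ M, IsGlb W M then h.choose else default

/-- Addition `x ⊕ y := sup {ι([x]_k + [y]_k) : k ∈ ℕ}` on `𝓡`. -/
noncomputable def add (x y : DecimalRep) : DecimalRep :=
  sup { z | ∃ k : ℕ, z = iota (trunc x k + trunc y k) }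

/-- The "additive inverse" map `Ψ(x₀.x₁x₂⋯) = (−1−x₀).(9−x₁)(9−x₂)⋯`. -/
def psi (x : DecimalRep) : DecimalRep :=
  (-1 - x.1, fun k => ⟨9 - (x.2 k).val, by have := (x.2 k).isLt; omega⟩)

/-- The signal map: `0` on the nonnegative part, `1` on the negative part. -/
noncomputable def sign (x : DecimalRep) : ℕ :=
  if le (iota 0) x then 0 else 1

/-- The absolute value `‖x‖ := max {x, Ψ(x)}` with respect to `⪯`. -/
noncomputable def norm (x : DecimalRep) : DecimalRep :=
  if le x (psi x) then psi x else x

/-- Multiplication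
`x ⊗ y := Ψ^(sign x + sign y) (sup {ι([‖x‖]_k · [‖y‖]_k) : k ∈ ℕ})` on `𝓡`. -/
noncomputable def mul (x y : DecimalRep) : DecimalRep :=
  psi^[sign x + sign y]
    (sup { z | ∃ k : ℕ, z = iota (trunc (norm x) k * trunc (norm y) k) })

/-- The multiplicative inverse
`x⁻¹ := Ψ^(sign x) (inf {ι(1/[‖x‖]_k) : k ∈ ℕ, [‖x‖]_k > 0})`. -/
noncomputable def inv (x : DecimalRep) : DecimalRep :=
  psi^[sign x]
    (inf { z | ∃ k : ℕ, 0 < trunc (norm x) k ∧ z = iota (1 / trunc (norm x) k) })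

/-- A sequence of rationals is Cauchy. -/
def IsCauchy (x : ℕ → ℚ) : Prop :=
  ∀ ε : ℚ, 0 < ε → ∃ N : ℕ, ∀ m n : ℕ, N ≤ m → N ≤ n → |x m - x n| < ε

/-- The upper limit `inf { sup {f k : k ≥ n} : n ∈ ℕ }` of a sequence in `𝓡`. -/
noncomputable def upperLimit (f : ℕ → DecimalRep) : DecimalRep :=
  inf { z | ∃ n : ℕ, z = sup { w | ∃ k : ℕ, n ≤ k ∧ w = f k } }

/-- The lower limit `sup { inf {f k : k ≥ n} : n ∈ ℕ }` of a sequence in `𝓡`. -/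
noncomputable def lowerLimit (f : ℕ → DecimalRep) : DecimalRep :=
  sup { z | ∃ n : ℕ, z = inf { w | ∃ k : ℕ, n ≤ k ∧ w = f k } }

end DecimalRep

namespace DecimalRep

def nm (x : DecimalRep) : ℕ → ℤ
  | 0 => x.1
  | k + 1 => 10 * nm x k + (x.2 k : ℕ)

lemma trunc_eq (x : DecimalRep) (k : ℕ) : trunc x k = (nm x k : ℚ) / 10 ^ k := by
  induction k with
  | zero => simp [trunc, nm]
  | succ k ih =>
    have h : trunc x (k+1) = trunc x k + ((x.2 k : ℕ) : ℚ) / 10 ^ (k + 1) := by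
      simp only [trunc, Finset.sum_range_succ]; ring
    rw [h, ih, nm]
    push_cast
    field_simp
    ring

lemma le_iff (x y : DecimalRep) : le x y ↔ ∀ k, nm x k ≤ nm y k := by
  unfold le
  refine forall_congr' fun k => ?_
  rw [trunc_eq, trunc_eq, div_le_div_iff_of_pos_right (by positivity)]
  exact_mod_cast Iff.rfl

/-- lower approximation -/
noncomputable def lo (x : DecimalRep) (k : ℕ) : ℝ := (nm x k : ℝ) / 10 ^ k

/-- upper approximation -/
noncomputable def hi (x : DecimalRep) (k : ℕ) : ℝ := ((nm x k : ℝ) + 1) / 10 ^ k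

lemma trunc_cast (x : DecimalRep) (k : ℕ) : ((trunc x k : ℚ) : ℝ) = lo x k := by
  rw [trunc_eq, lo]; push_cast; rfl

lemma lo_mono (x : DecimalRep) : Monotone (lo x) := by
  refine monotone_nat_of_le_succ fun k => ?_
  simp only [lo, nm]
  rw [div_le_div_iff₀ (by positivity) (by positivity), pow_succ]
  push_cast
  have : (0:ℝ) ≤ ((x.2 k : ℕ) : ℝ) := by positivity
  have h2 : (0:ℝ) < 10 ^ k := by positivity
  nlinarith [mul_nonneg this h2.le]

lemma hi_anti (x : DecimalRep) : Antitone (hi x) := by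
  refine antitone_nat_of_succ_le fun k => ?_
  simp only [hi, nm]
  rw [div_le_div_iff₀ (by positivity) (by positivity), pow_succ]
  push_cast
  have : ((x.2 k : ℕ) : ℝ) ≤ 9 := by
    have := (x.2 k).isLt
    exact_mod_cast (by omega : (x.2 k : ℕ) ≤ 9)
  have h2 : (0:ℝ) < 10 ^ k := by positivity
  nlinarith [mul_nonneg (sub_nonneg.2 this) h2.le]

lemma lo_lt_hi (x : DecimalRep) (k : ℕ) : lo x k < hi x k := by
  unfold lo hi
  gcongr
  linarith

lemma lo_le_hi (x : DecimalRep) (i j : ℕ) : lo x i ≤ hi x j :=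
  (lo_mono x (le_max_left i j)).trans
    ((lo_lt_hi x _).le.trans (hi_anti x (le_max_right i j)))

noncomputable def val (x : DecimalRep) : ℝ := ⨆ k, lo x k

lemma bdd (x : DecimalRep) : BddAbove (Set.range (lo x)) :=
  ⟨hi x 0, by rintro _ ⟨k, rfl⟩; exact lo_le_hi x k 0⟩

lemma lo_le_val (x : DecimalRep) (k : ℕ) : lo x k ≤ val x := le_ciSup (bdd x) k

lemma val_le_hi (x : DecimalRep) (k : ℕ) : val x ≤ hi x k := ciSup_le fun i => lo_le_hi x i k

open Filter Topology

lemma tendsto_lo (x : DecimalRep) : Tendsto (lo x) atTop (𝓝 (val x)) :=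
  tendsto_atTop_ciSup (lo_mono x) (bdd x)

lemma tendsto_inv_pow : Tendsto (fun k : ℕ => (1:ℝ) / 10 ^ k) atTop (𝓝 0) := by
  have := tendsto_pow_atTop_nhds_zero_of_lt_one (r := (1/10 : ℝ)) (by norm_num) (by norm_num)
  simpa using this

lemma le_of_val_lt {x y : DecimalRep} (h : val x < val y) : le x y := by
  rw [le_iff]
  intro k
  by_contra! hk
  have h1 := val_le_hi y k
  have h2 := lo_le_val x k
  have : hi y k ≤ lo x k := by
    unfold hi lo
    gcongr
    exact_mod_cast hk
  linarith

lemma val_le_of_le {x y : DecimalRep} (h : le x y) : val x ≤ val y := by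
  rw [le_iff] at h
  refine ciSup_le fun k => le_trans ?_ (lo_le_val y k)
  unfold lo
  gcongr
  exact_mod_cast h k

lemma nm_inj {x y : DecimalRep} (h : ∀ k, nm x k = nm y k) : x = y := by
  refine Prod.ext (h 0) (funext fun k => ?_)
  have h1 := h (k+1)
  have h2 := h k
  simp only [nm] at h1
  apply Fin.ext
  omega

lemma exists_gap {x y : DecimalRep} (h : le x y) (hne : x ≠ y) : ∃ k, hi x k ≤ lo y k := by
  rw [le_iff] at h
  by_contra! hc
  refine hne (nm_inj fun k => ?_)
  refine le_antisymm (h k) ?_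
  by_contra! hk
  refine absurd (hc k) (not_lt.2 ?_)
  unfold hi lo
  gcongr
  exact_mod_cast hk

lemma no_between {x y z : DecimalRep} (hv : val x = val y) (h1 : le x z) (h2 : le z y)
    (n1 : z ≠ x) (n2 : z ≠ y) : False := by
  obtain ⟨j, hj⟩ := exists_gap h1 n1.symm
  obtain ⟨i, hi'⟩ := exists_gap h2 n2
  have a1 := val_le_hi x j
  have a2 := lo_le_val y i
  have a3 := lo_mono z (le_max_left j i)
  have a4 := lo_lt_hi z (max j i)
  have a5 := hi_anti z (le_max_right j i)
  linarith

lemma nm_iota (q : ℚ) (k : ℕ) : nm (iota q) k = ⌊q * 10 ^ k⌋ := by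
  induction k with
  | zero => simp [nm, iota]
  | succ k ih =>
    rw [nm, ih]
    have e : (((iota q).2 k : ℕ) : ℤ) = ⌊q * 10 ^ (k + 1)⌋ % 10 := by
      simp only [iota]
      exact Int.toNat_of_nonneg (Int.emod_nonneg _ (by norm_num))
    rw [e]
    have : ⌊q * 10 ^ k⌋ = ⌊q * 10 ^ (k + 1)⌋ / 10 := by
      rw [Int.floor_eq_iff]
      have h1 := Int.floor_le (q * 10 ^ (k+1))
      have h2 := Int.lt_floor_add_one (q * 10 ^ (k+1))
      rw [pow_succ] at h1 h2 ⊢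
      set m := ⌊q * (10 ^ k * 10)⌋
      have h3 : 10 * (m / 10) ≤ m := by omega
      have h4 : m + 1 ≤ 10 * (m / 10) + 10 := by omega
      have h3' : (10:ℚ) * ((m / 10 : ℤ) : ℚ) ≤ m := by exact_mod_cast h3
      have h4' : (m:ℚ) + 1 ≤ 10 * ((m / 10 : ℤ) : ℚ) + 10 := by exact_mod_cast h4
      constructor <;> linarith
    omega

lemma val_iota (q : ℚ) : val (iota q) = q := by
  have hl : ∀ k, lo (iota q) k ≤ q := fun k => by
    rw [lo, nm_iota, div_le_iff₀ (by positivity)]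
    exact_mod_cast Int.floor_le (q * 10 ^ k)
  have hh : ∀ k, (q : ℝ) ≤ lo (iota q) k + 1 / 10 ^ k := fun k => by
    rw [lo, nm_iota, ← add_div, le_div_iff₀ (by positivity)]
    exact_mod_cast (Int.lt_floor_add_one (q * 10 ^ k)).le
  refine le_antisymm (ciSup_le hl) ?_
  have := (tendsto_lo (iota q)).add tendsto_inv_pow
  rw [add_zero] at this
  exact ge_of_tendsto' this hh

lemma equiv_iff (x y : DecimalRep) : equiv x y ↔ val x = val y := by
  have key : ∀ x y : DecimalRep, val x < val y →
      ∃ z, z ≠ x ∧ z ≠ y ∧ le x z ∧ le z y := by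
    intro x y h
    obtain ⟨q, h1, h2⟩ := exists_rat_btwn h
    rw [← val_iota q] at h1 h2
    refine ⟨iota q, ?_, ?_, le_of_val_lt h1, le_of_val_lt h2⟩
    · intro e; rw [e] at h1; exact lt_irrefl _ h1
    · intro e; rw [e] at h2; exact lt_irrefl _ h2
  constructor
  · intro h
    by_contra hne
    rcases lt_or_gt_of_ne hne with hl | hl
    · obtain ⟨z, a, b, c, d⟩ := key _ _ hl
      exact h ⟨z, a, b, Or.inl ⟨c, d⟩⟩
    · obtain ⟨z, a, b, c, d⟩ := key _ _ hl
      exact h ⟨z, b, a, Or.inr ⟨c, d⟩⟩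
  · rintro h ⟨z, a, b, ⟨c, d⟩ | ⟨c, d⟩⟩
    · exact no_between h c d a b
    · exact no_between h.symm c d b a

lemma nm_psi (x : DecimalRep) (k : ℕ) : nm (psi x) k = -nm x k - 1 := by
  induction k with
  | zero => simp only [nm, psi]; ring
  | succ k ih =>
    have := (x.2 k).isLt
    simp only [nm, ih]
    simp only [psi]
    omega

lemma val_psi (x : DecimalRep) : val (psi x) = -val x := by
  have h1 := tendsto_lo (psi x)
  have h2 : Tendsto (lo (psi x)) atTop (𝓝 (-val x - 0)) := by
    refine ((tendsto_lo x).neg.sub tendsto_inv_pow).congr fun k => ?_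
    simp only [lo, nm_psi]
    push_cast
    ring
  rw [sub_zero] at h2
  exact tendsto_nhds_unique h1 h2

lemma val_psi_iter (n : ℕ) (x : DecimalRep) : val (psi^[n] x) = (-1) ^ n * val x := by
  induction n with
  | zero => simp
  | succ n ih => rw [Function.iterate_succ_apply', val_psi, ih]; ring

lemma le_of_fst_lt {x y : DecimalRep} (h : x.1 < y.1) : le x y := by
  rw [le_iff]
  intro k
  induction k with
  | zero => exact h.le
  | succ k ih =>
    have : ∀ k, nm x k + 1 ≤ nm y k := by
      intro k
      induction k with
      | zero => exact h
      | succ k ih =>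
        have := (x.2 k).isLt
        simp only [nm]; omega
    have := this (k+1)
    omega

lemma nm_nonneg {x : DecimalRep} (h : 0 ≤ x.1) (k : ℕ) : 0 ≤ nm x k := by
  induction k with
  | zero => exact h
  | succ k ih => simp only [nm]; omega

lemma lo_nonneg {x : DecimalRep} (h : 0 ≤ x.1) (k : ℕ) : 0 ≤ lo x k := by
  unfold lo
  have : (0:ℝ) ≤ nm x k := by exact_mod_cast nm_nonneg h k
  positivity

lemma val_nonneg {x : DecimalRep} (h : 0 ≤ x.1) : 0 ≤ val x :=
  (lo_nonneg h 0).trans (lo_le_val x 0)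

lemma le_psi_iff (x : DecimalRep) : le x (psi x) ↔ x.1 < 0 := by
  constructor
  · intro h
    have := (le_iff _ _).1 h 0
    simp only [nm, psi] at this
    omega
  · intro h
    apply le_of_fst_lt
    simp only [psi]
    omega

lemma zero_le_iff (x : DecimalRep) : le (iota 0) x ↔ 0 ≤ x.1 := by
  rw [le_iff]
  simp only [nm_iota]
  constructor
  · intro h
    simpa [nm] using h 0
  · intro h k
    simpa using nm_nonneg h k

lemma norm_fst (x : DecimalRep) : 0 ≤ (norm x).1 := by
  unfold norm
  split_ifs with h <;> rw [le_psi_iff] at h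
  · simp only [psi]; omega
  · omega

lemma sign_val (x : DecimalRep) : (-1) ^ sign x * val (norm x) = val x := by
  unfold sign norm
  by_cases h : 0 ≤ x.1
  · rw [if_pos ((zero_le_iff x).2 h), if_neg (by rw [le_psi_iff]; omega)]; simp
  · rw [if_neg (by rwa [zero_le_iff]), if_pos (by rw [le_psi_iff]; omega), val_psi]; simp

lemma exists_nm (n : ℕ → ℤ) (h : ∀ k, 10 * n k ≤ n (k+1) ∧ n (k+1) ≤ 10 * n k + 9) :
    ∃ x : DecimalRep, ∀ k, nm x k = n k := by
  refine ⟨(n 0, fun k => ⟨(n (k+1) - 10 * n k).toNat, by have := h k; omega⟩), fun k => ?_⟩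
  induction k with
  | zero => rfl
  | succ k ih =>
    rw [nm, ih]
    have := h k
    simp only
    omega

lemma exists_lub (f : ℕ → DecimalRep) (hf : ∀ i j, i ≤ j → le (f i) (f j)) (B : DecimalRep)
    (hB : ∀ i, le (f i) B) : ∃ M, IsLub { z | ∃ k : ℕ, z = f k } M := by
  have hst : ∀ j, ∃ K, ∀ k, K ≤ k → nm (f k) j = nm (f K) j := by
    intro j
    obtain ⟨m, ⟨K, hK⟩, hm⟩ := Int.exists_greatest_of_bdd (P := fun m => ∃ k, nm (f k) j = m)
      ⟨nm B j, by rintro _ ⟨k, rfl⟩; exact (le_iff _ _).1 (hB k) j⟩ ⟨_, 0, rfl⟩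
    refine ⟨K, fun k hk => le_antisymm ?_ ((le_iff _ _).1 (hf K k hk) j)⟩
    rw [hK]
    exact hm _ ⟨k, rfl⟩
  choose K hK using hst
  obtain ⟨M, hM⟩ := exists_nm (fun j => nm (f (K j)) j) (by
    intro j
    have h1 := hK j (max (K j) (K (j+1))) (le_max_left _ _)
    have h2 := hK (j+1) (max (K j) (K (j+1))) (le_max_right _ _)
    rw [← h1, ← h2, nm]
    have := ((f (max (K j) (K (j+1)))).2 j).isLt
    omega)
  refine ⟨M, ?_, ?_⟩
  · rintro _ ⟨k, rfl⟩
    rw [le_iff]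
    intro j
    rw [hM, ← hK j (max (K j) k) (le_max_left _ _)]
    exact (le_iff _ _).1 (hf _ _ (le_max_right _ _)) j
  · intro M' h
    rw [le_iff]
    intro j
    rw [hM]
    exact (le_iff _ _).1 (h _ ⟨K j, rfl⟩) j

lemma iota_mono {p q : ℚ} (h : p ≤ q) : le (iota p) (iota q) := by
  rw [le_iff]
  intro k
  rw [nm_iota, nm_iota]
  apply Int.floor_le_floor
  gcongr

lemma val_sup (p : ℕ → ℚ) (hp : Monotone p) (P : ℝ)
    (hP : Tendsto (fun k => (p k : ℝ)) atTop (𝓝 P)) :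
    val (sup { z | ∃ k : ℕ, z = iota (p k) }) = P := by
  have hm : Monotone (fun k => (p k : ℝ)) := fun i j h => Rat.cast_le.2 (hp h)
  have hle : ∀ k, (p k : ℝ) ≤ P := fun k => hm.ge_of_tendsto hP k
  have hub : ∀ q : ℚ, P < q → ∀ k, le (iota (p k)) (iota q) := fun q hq k =>
    iota_mono (by exact_mod_cast (hle k).trans hq.le)
  obtain ⟨B, hB⟩ := exists_rat_gt P
  have hex := exists_lub (fun k => iota (p k)) (fun i j h => iota_mono (hp h)) (iota B) (hub B hB)
  have hl : IsLub { z | ∃ k : ℕ, z = iota (p k) } (sup { z | ∃ k : ℕ, z = iota (p k) }) := by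
    unfold sup
    rw [dif_pos hex]
    exact hex.choose_spec
  generalize sup { z | ∃ k : ℕ, z = iota (p k) } = S at hl
  refine le_antisymm ?_ ?_
  · by_contra! hc
    obtain ⟨q, h1, h2⟩ := exists_rat_btwn hc
    have := val_le_of_le (hl.2 (iota q) (by rintro _ ⟨k, rfl⟩; exact hub q h1 k))
    rw [val_iota] at this
    linarith
  · refine le_of_tendsto' hP fun k => ?_
    rw [← val_iota]
    exact val_le_of_le (hl.1 _ ⟨k, rfl⟩)

lemma val_mul (x y : DecimalRep) : val (mul x y) = val x * val y := by
  unfold mul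
  rw [val_psi_iter, val_sup (fun k => trunc (norm x) k * trunc (norm y) k)
    (P := val (norm x) * val (norm y))]
  · have hx := sign_val x
    have hy := sign_val y
    calc (-1 : ℝ) ^ (sign x + sign y) * (val (norm x) * val (norm y))
        = ((-1) ^ sign x * val (norm x)) * ((-1) ^ sign y * val (norm y)) := by ring
      _ = val x * val y := by rw [hx, hy]
  · intro i j h
    have h1 := lo_mono (norm x) h
    have h2 := lo_mono (norm y) h
    have h3 := lo_nonneg (norm_fst x) j
    have h4 := lo_nonneg (norm_fst y) i
    have := mul_le_mul h1 h2 h4 h3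
    rw [← trunc_cast, ← trunc_cast, ← trunc_cast, ← trunc_cast] at this
    exact_mod_cast this
  · refine ((tendsto_lo (norm x)).mul (tendsto_lo (norm y))).congr fun k => ?_
    rw [← trunc_cast, ← trunc_cast]
    push_cast
    rfl

end DecimalRep

open DecimalRep in
/-- Multiplication on `𝓡` respects the equivalence `∼`. -/
theorem mul_equiv_mul (x y z w : DecimalRep) (hxz : equiv x z) (hyw : equiv y w) :
    equiv (mul x y) (mul z w) := by
  rw [equiv_iff] at *
  rw [val_mul, val_mul, hxz, hyw]
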